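/- Let s = (s_1,…,s_d) ∈ ℕ^d with s_1 > 1, weight |s| = s_1 + … + s_d and partial sums |s|_r = s_1 + … + s_r (|s|_0 = 0). For indices n_1 ≥ … ≥ n_{|s|} ≥ 1, set Q(s) := Σ_{r=1}^{d} (n_{|s|_{r−1}+1} − n_{|s|_r}). Then ζ*(s) = Σ_{n_1 ≥ n_2 ≥ … ≥ n_{|s|} ≥ 1} 1 / ( (Q(s)+1) · (Q(s)+n_{|s|}+1) · n_1 n_2 ⋯ n_{|s|−1} ). -/

import Mathlib

/-- One-dimensional polylogarithm `Li_s(x) = ∑_{n≥1} x^n/n^s`. -/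
noncomputable def Li (s : ℕ) (x : ℝ) : ℝ := ∑' n : ℕ, x ^ (n + 1) / (n + 1 : ℝ) ^ s

/-- Multiple polylogarithm
`Li*_{s₁,…,s_d}(x₁,…,x_d) = ∑_{n₁ ≥ ⋯ ≥ n_d ≥ 1} ∏ᵢ xᵢ^{nᵢ}/nᵢ^{sᵢ}`. -/
noncomputable def LiStar (s : List ℕ) (x : List ℝ) : ℝ :=
  ∑' m : {m : Fin s.length → ℕ // (∀ i j : Fin s.length, i ≤ j → m j ≤ m i) ∧ ∀ i, 1 ≤ m i},
    ∏ i : Fin s.length, x.getD (i : ℕ) 0 ^ m.1 i / (m.1 i : ℝ) ^ s.get i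

/-- `ent m α` is the entry `n_{α+1}` (0-indexed access) of the index tuple `m`,
with junk value `1` out of range. -/
def ent {L : ℕ} (m : Fin L → ℕ) (α : ℕ) : ℕ :=
  if h : α < L then m ⟨α, h⟩ else 1

/-- `Q(s)` as a function of the summation indices `n₁, n₂, …` (0-indexed via `ent`):
`Q(s) = ∑_{r=1}^{d} (n_{|s|_{r-1}+1} − n_{|s|_r})`. -/
def Qs (s : List ℕ) {L : ℕ} (t : Fin L → ℕ) : ℕ :=
  ∑ r ∈ Finset.range s.length,
    (ent t ((s.take r).sum) - ent t ((s.take (r + 1)).sum - 1))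

open Finset

/-- Antitone tuples of length `L` with entries in `[1,N]`. -/
def antiT (L N : ℕ) : Finset (Fin L → ℕ) :=
  (Fintype.piFinset (fun _ : Fin L => Finset.Icc 1 N)).filter
    (fun t => ∀ i j : Fin L, i ≤ j → t j ≤ t i)

theorem mem_antiT {L N : ℕ} {t : Fin L → ℕ} :
    t ∈ antiT L N ↔ (∀ i, 1 ≤ t i ∧ t i ≤ N) ∧ ∀ i j : Fin L, i ≤ j → t j ≤ t i := by
  simp [antiT]

theorem cons_mem_antiT {L N m : ℕ} {t : Fin L → ℕ} :
    (Fin.cons m t : Fin (L+1) → ℕ) ∈ antiT (L+1) N ↔ (1 ≤ m ∧ m ≤ N) ∧ t ∈ antiT L m := by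
  simp only [mem_antiT, Fin.forall_fin_succ, Fin.cons_zero, Fin.cons_succ, Fin.succ_le_succ_iff]
  constructor
  · rintro ⟨⟨h1, h2⟩, h3, h4⟩
    exact ⟨h1, fun i => ⟨(h2 i).1, h3.2 i (Fin.zero_le _)⟩, fun i => (h4 i).2⟩
  · rintro ⟨h1, h2, h3⟩
    refine ⟨⟨h1, fun i => ⟨(h2 i).1, (h2 i).2.trans h1.2⟩⟩, ⟨fun _ => le_rfl, fun i _ => (h2 i).2⟩, ?_⟩
    intro i
    exact ⟨fun h => absurd h (by simp), h3 i⟩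

theorem sum_antiT_succ (L N : ℕ) (F : (Fin (L+1) → ℕ) → ℝ) :
    ∑ t ∈ antiT (L+1) N, F t = ∑ m ∈ Finset.Icc 1 N, ∑ t ∈ antiT L m, F (Fin.cons m t) := by
  rw [Finset.sum_sigma']
  symm
  refine Finset.sum_bij' (fun (p : (_ : ℕ) × (Fin L → ℕ)) _ => (Fin.cons p.1 p.2 : Fin (L+1) → ℕ))
    (fun t _ => ⟨t 0, Fin.tail t⟩) ?_ ?_ ?_ ?_ ?_
  · rintro ⟨m, t⟩ h
    simp only [Finset.mem_sigma, Finset.mem_Icc] at h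
    exact cons_mem_antiT.2 h
  · intro t h
    rw [← Fin.cons_self_tail t, cons_mem_antiT] at h
    simpa only [Finset.mem_sigma, Finset.mem_Icc] using h
  · rintro ⟨m, t⟩ h
    simp
  · intro t h
    simp
  · intro p h
    rfl

theorem antiT_zero (N : ℕ) : antiT 0 N = {Fin.elim0} := by
  ext t
  simp only [mem_antiT, Finset.mem_singleton]
  constructor
  · intro _; exact Subsingleton.elim _ _
  · intro _; exact ⟨fun i => i.elim0, fun i => i.elim0⟩

/-- Truncated zeta-star values. -/
noncomputable def Zs : List ℕ → ℕ → ℝ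
  | [], _ => 1
  | a :: s, N => ∑ m ∈ Finset.Icc 1 N, Zs s m / (m : ℝ) ^ a

theorem Zs_nonneg (s : List ℕ) : ∀ N, 0 ≤ Zs s N := by
  induction s with
  | nil => intro N; simp [Zs]
  | cons a s ih =>
    intro N
    exact Finset.sum_nonneg fun m _ => div_nonneg (ih m) (by positivity)

theorem Zs_mono (s : List ℕ) : Monotone (Zs s) := by
  cases s with
  | nil => intro a b _; simp [Zs]
  | cons a s =>
    intro M N h
    exact Finset.sum_le_sum_of_subset_of_nonneg (Finset.Icc_subset_Icc_right h)
      fun m _ _ => div_nonneg (Zs_nonneg s m) (by positivity)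

theorem Zs_eq (s : List ℕ) : ∀ N, ∑ m ∈ antiT s.length N,
    ∏ i : Fin s.length, 1 / (m i : ℝ) ^ s.get i = Zs s N := by
  induction s with
  | nil => intro N; simp [Zs, antiT_zero]
  | cons a s ih =>
    intro N
    simp only [List.length_cons]
    rw [sum_antiT_succ]
    simp only [Zs]
    refine Finset.sum_congr rfl fun m _ => ?_
    rw [← ih m, Finset.sum_div]
    refine Finset.sum_congr rfl fun t _ => ?_
    rw [Fin.prod_univ_succ]
    simp [div_eq_inv_mul]

/-- Binomial expectation operator. -/
noncomputable def Pb (x : ℝ) (φ : ℕ → ℝ) (n : ℕ) : ℝ :=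
  ∑ k ∈ Finset.range (n+1), (n.choose k : ℝ) * (1-x)^k * x^(n-k) * φ k

theorem Pb_succ (x : ℝ) (φ : ℕ → ℝ) (n : ℕ) :
    Pb x φ (n+1) = Pb x (fun k => (1-x) * φ (k+1) + x * φ k) n := by
  unfold Pb
  have h2 : ∀ k ∈ Finset.range (n+1), ((n.choose k : ℝ) * (1-x)^k * x^(n-k) * ((1-x) * φ (k+1) + x * φ k))
     = (n.choose k : ℝ) * (1-x)^(k+1) * x^(n-k) * φ (k+1) +
       (n.choose k : ℝ) * (1-x)^k * x^(n+1-k) * φ k := by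
    intro k hk
    have : n + 1 - k = (n-k)+1 := by simp at hk; omega
    rw [this]; ring
  rw [Finset.sum_congr rfl h2, Finset.sum_add_distrib]
  have h3 : ∑ k ∈ Finset.range (n+1), (n.choose k : ℝ) * (1-x)^k * x^(n+1-k) * φ k
     = ∑ k ∈ Finset.range (n+2), (n.choose k : ℝ) * (1-x)^k * x^(n+1-k) * φ k := by
    rw [Finset.sum_range_succ _ (n+1)]; simp
  rw [h3, Finset.sum_range_succ', Finset.sum_range_succ' _ (n+1), ← add_assoc,
    ← Finset.sum_add_distrib]
  congr 1
  · refine Finset.sum_congr rfl fun k _ => ?_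
    rw [Nat.choose_succ_succ]
    have : n + 1 - (k+1) = n - k := by omega
    rw [this]; push_cast; ring
  · simp

theorem Pb_shift (x : ℝ) (φ : ℕ → ℝ) (h0 : φ 0 = 0) (n : ℕ) :
    Pb x φ (n+1) / ((n+1 : ℕ) : ℝ) = (1-x) * Pb x (fun k => φ (k+1) / ((k+1 : ℕ) : ℝ)) n := by
  unfold Pb
  rw [Finset.sum_range_succ', Finset.mul_sum, h0, mul_zero, add_zero, Finset.sum_div]
  refine Finset.sum_congr rfl fun k _ => ?_
  have h := Nat.add_one_mul_choose_eq n k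
  have h' : ((n+1 : ℕ) : ℝ) * (n.choose k : ℝ) = ((n+1).choose (k+1) : ℝ) * ((k+1 : ℕ) : ℝ) := by
    exact_mod_cast h
  have hn : ((n+1 : ℕ) : ℝ) ≠ 0 := by positivity
  have hk : ((k+1 : ℕ) : ℝ) ≠ 0 := by positivity
  have : n + 1 - (k+1) = n - k := by omega
  rw [this]
  field_simp
  linear_combination (-(1-x)^(k+1) * x^(n-k) * φ (k+1)) * h'

theorem Pb_A (x : ℝ) (φ : ℕ → ℝ) (h0 : φ 0 = 0) (n : ℕ) :
    ∑ m ∈ Finset.Icc 1 n, Pb x φ m / (m : ℝ) =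
      Pb x (fun k => ∑ j ∈ Finset.Icc 1 k, φ j / (j : ℝ)) n := by
  induction n with
  | zero => simp [Pb]
  | succ n ih =>
    rw [Finset.sum_Icc_succ_top (by omega), ih, Pb_shift x φ h0, Pb_succ]
    unfold Pb
    rw [Finset.mul_sum, ← Finset.sum_add_distrib]
    refine Finset.sum_congr rfl fun k _ => ?_
    beta_reduce
    rw [Finset.sum_Icc_succ_top (by omega : 1 ≤ k + 1)]
    ring

theorem Pb_B (x : ℝ) (φ : ℕ → ℝ) (h0 : φ 0 = 0) (n : ℕ) :
    ∑ m ∈ Finset.Icc 1 n, x^(n-m) * (Pb x φ m / (m : ℝ)) =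
      Pb x (fun k => φ k / (k : ℝ)) n := by
  induction n with
  | zero => simp [Pb]
  | succ n ih =>
    have : ∑ m ∈ Finset.Icc 1 n, x^(n+1-m) * (Pb x φ m / (m : ℝ))
        = x * ∑ m ∈ Finset.Icc 1 n, x^(n-m) * (Pb x φ m / (m : ℝ)) := by
      rw [Finset.mul_sum]
      refine Finset.sum_congr rfl fun m hm => ?_
      have : n + 1 - m = (n-m)+1 := by simp at hm; omega
      rw [this]; ring
    rw [Finset.sum_Icc_succ_top (by omega), this, ih, Pb_shift x φ h0, Pb_succ]
    unfold Pb
    rw [Finset.mul_sum, Finset.mul_sum, Nat.sub_self, pow_zero, one_mul, ← Finset.sum_add_distrib]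
    refine Finset.sum_congr rfl fun k _ => ?_
    ring

theorem ent_cons_zero {L : ℕ} (m : ℕ) (t : Fin L → ℕ) :
    ent (Fin.cons m t : Fin (L+1) → ℕ) 0 = m := by
  simp [ent]

theorem ent_cons_succ {L : ℕ} (m : ℕ) (t : Fin L → ℕ) (i : ℕ) :
    ent (Fin.cons m t : Fin (L+1) → ℕ) (i+1) = ent t i := by
  unfold ent
  by_cases h : i < L
  · rw [dif_pos h, dif_pos (by omega)]
    exact Fin.cons_succ (α := fun _ => ℕ) m t ⟨i, h⟩
  · rw [dif_neg h, dif_neg (by omega)]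

theorem take_sum_pos (s : List ℕ) (hs : ∀ e ∈ s, 1 ≤ e) (r : ℕ) (hr : r < s.length) :
    1 ≤ (s.take (r+1)).sum := by
  cases s with
  | nil => simp at hr
  | cons a s =>
    have := hs a (by simp)
    simp; omega

theorem Qs_one {L : ℕ} (s : List ℕ) (hs : ∀ e ∈ s, 1 ≤ e) (m : ℕ) (t : Fin L → ℕ) :
    Qs (1 :: s) (Fin.cons m t : Fin (L+1) → ℕ) = Qs s t := by
  unfold Qs
  rw [List.length_cons, Finset.sum_range_succ']
  simp only [List.take_succ_cons, List.sum_cons, List.take_zero, List.sum_nil, add_zero,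
    Nat.sub_self, Nat.add_sub_cancel_left]
  refine Finset.sum_congr rfl fun r hr => ?_
  have h1 := take_sum_pos s hs r (by simpa using hr)
  obtain ⟨y, hy⟩ : ∃ y, (s.take (r+1)).sum = y + 1 := ⟨_, (Nat.sub_add_cancel h1).symm⟩
  rw [hy, Nat.add_comm 1, ent_cons_succ, ent_cons_succ]; simp

theorem Qs_step {L : ℕ} (a : ℕ) (s : List ℕ) (m : ℕ)
    (t : Fin L → ℕ) (h1 : ent t 0 ≤ m) (h2 : ent t a ≤ ent t 0) :
    Qs ((a+2) :: s) (Fin.cons m t : Fin (L+1) → ℕ) = (m - ent t 0) + Qs ((a+1) :: s) t := by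
  unfold Qs
  rw [List.length_cons, Finset.sum_range_succ', List.length_cons, Finset.sum_range_succ']
  simp only [List.take_succ_cons, List.sum_cons, List.take_zero, List.sum_nil, add_zero]
  rw [show a + 2 - 1 = a + 1 by omega, show a + 1 - 1 = a by omega, ent_cons_succ, ent_cons_zero]
  have : ∀ r ∈ Finset.range s.length,
     (ent (Fin.cons m t : Fin (L+1) → ℕ) (a + 2 + (s.take r).sum)
       - ent (Fin.cons m t : Fin (L+1) → ℕ) (a + 2 + (s.take (r+1)).sum - 1))
     = ent t (a + 1 + (s.take r).sum) - ent t (a + 1 + (s.take (r+1)).sum - 1) := by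
    intro r _
    rw [show a + 2 + (s.take r).sum = a + 1 + (s.take r).sum + 1 by omega,
      show a + 2 + (s.take (r+1)).sum - 1 = a + 1 + (s.take (r+1)).sum - 1 + 1 by omega,
      ent_cons_succ, ent_cons_succ]
  rw [Finset.sum_congr rfl this]
  omega

/-- Weight with parameter `x`. -/
noncomputable def Wx (x : ℝ) (s : List ℕ) {L : ℕ} (t : Fin L → ℕ) : ℝ :=
  x ^ Qs s t * (1 - x ^ ent t (L-1)) / ∏ i ∈ Finset.range L, (ent t i : ℝ)

/-- Inner function. -/
noncomputable def phi (a : ℕ) (s : List ℕ) (k : ℕ) : ℝ :=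
  if k = 0 then 0 else Zs s k / (k : ℝ) ^ (a-1)

theorem prod_cons {L : ℕ} (m : ℕ) (t : Fin L → ℕ) :
    ∏ i ∈ Finset.range (L+1), (ent (Fin.cons m t : Fin (L+1) → ℕ) i : ℝ) =
      m * ∏ i ∈ Finset.range L, (ent t i : ℝ) := by
  rw [Finset.prod_range_succ', ent_cons_zero, mul_comm]
  simp only [ent_cons_succ]

theorem Pb_one (x : ℝ) (m : ℕ) : Pb x (phi 1 []) m = 1 - x ^ m := by
  have h : ∑ k ∈ Finset.range (m+1), (m.choose k : ℝ) * (1-x)^k * x^(m-k) = 1 := by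
    have := add_pow (1-x) x m
    rw [sub_add_cancel, one_pow] at this
    refine Eq.trans (Finset.sum_congr rfl fun k _ => ?_) this.symm
    ring
  unfold Pb
  rw [Finset.sum_range_succ'] at h ⊢
  simp [phi, Zs] at h ⊢
  linarith

theorem phi_sum (a : ℕ) (ha : 1 ≤ a) (s : List ℕ) (k : ℕ) :
    ∑ j ∈ Finset.Icc 1 k, phi a s j / (j : ℝ) = Zs (a :: s) k := by
  simp only [Zs]
  refine Finset.sum_congr rfl fun j hj => ?_
  have : j ≠ 0 := by simp at hj; omega
  obtain ⟨b, rfl⟩ : ∃ b, a = b + 1 := ⟨a-1, by omega⟩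
  rw [phi, if_neg this, div_div, Nat.add_sub_cancel, pow_succ]

theorem key (x : ℝ) : ∀ (L a : ℕ) (s : List ℕ), (∀ e ∈ a :: s, 1 ≤ e) → (a :: s).sum = L + 1 →
    ∀ m, ∑ t ∈ antiT L m, Wx x (a :: s) (Fin.cons m t : Fin (L+1) → ℕ) =
      Pb x (phi a s) m / (m : ℝ) := by
  intro L
  induction L with
  | zero =>
    intro a s hs hL m
    have ha := hs a (by simp)
    have hs0 : s = [] := by
      cases s with
      | nil => rfl
      | cons b s =>
        have := hs b (by simp)
        simp at hL; omega
    subst hs0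
    have : a = 1 := by simpa using hL
    subst this
    rw [antiT_zero, Finset.sum_singleton, Pb_one, Wx, prod_cons, Qs_one _ (by simp)]
    simp [Qs, ent_cons_zero]
  | succ L ih =>
    intro a s hs hL m
    have ha := hs a (by simp)
    rw [sum_antiT_succ]
    have hW : ∀ (s' : List ℕ) (j : ℕ) (m' : ℕ) (t : Fin L → ℕ),
        Qs (a :: s) (Fin.cons m (Fin.cons m' t : Fin (L+1) → ℕ) : Fin (L+2) → ℕ)
          = j + Qs s' (Fin.cons m' t : Fin (L+1) → ℕ) →
        Wx x (a :: s) (Fin.cons m (Fin.cons m' t : Fin (L+1) → ℕ) : Fin (L+2) → ℕ)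
          = x ^ j * Wx x s' (Fin.cons m' t : Fin (L+1) → ℕ) / m := by
      intro s' j m' t h
      rw [Wx, Wx, h, prod_cons m]
      rw [show L + 1 + 1 - 1 = L + 1 by omega, show L + 1 - 1 = L by omega, ent_cons_succ m, pow_add]
      rw [mul_comm (m : ℝ), ← div_div]
      ring
    rcases Nat.lt_or_ge 1 a with h | h
    · obtain ⟨b, rfl⟩ : ∃ b, a = b + 2 := ⟨a-2, by omega⟩
      have hs' : ∀ e ∈ (b+1) :: s, 1 ≤ e := by
        intro e he
        rcases List.mem_cons.1 he with rfl | he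
        · omega
        · exact hs e (List.mem_cons_of_mem _ he)
      have hL' : ((b+1) :: s).sum = L + 1 := by
        simp at hL ⊢; omega
      have : ∀ m' ∈ Finset.Icc 1 m, ∑ t ∈ antiT L m',
          Wx x ((b+2) :: s) (Fin.cons m (Fin.cons m' t : Fin (L+1) → ℕ) : Fin (L+2) → ℕ)
          = x^(m-m') * (Pb x (phi (b+1) s) m' / (m' : ℝ)) / m := by
        intro m' hm'
        rw [← ih (b+1) s hs' hL' m', Finset.mul_sum, Finset.sum_div]
        refine Finset.sum_congr rfl fun t ht => ?_
        refine hW ((b+1)::s) (m-m') m' t ?_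
        rw [Qs_step, ent_cons_zero]
        · rw [ent_cons_zero]; simp at hm'; omega
        · rw [ent_cons_zero]
          have hb : b < L + 1 := by simp at hL; omega
          cases b with
          | zero => rw [ent_cons_zero]
          | succ b =>
            rw [ent_cons_succ, ent, dif_pos (by omega)]
            exact ((mem_antiT.1 ht).1 _).2
      rw [Finset.sum_congr rfl this, ← Finset.sum_div, Pb_B x _ (by simp [phi])]
      congr 2
      funext k
      unfold phi
      split_ifs
      · simp
      · rw [div_div, ← pow_succ]; rfl
    · have : a = 1 := by omega
      subst this
      cases s with
      | nil => simp at hL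
      | cons b s =>
        have hs' : ∀ e ∈ b :: s, 1 ≤ e := fun e he => hs e (List.mem_cons_of_mem _ he)
        have hL' : (b :: s).sum = L + 1 := by
          simp at hL ⊢; omega
        have : ∀ m' ∈ Finset.Icc 1 m, ∑ t ∈ antiT L m',
            Wx x (1 :: b :: s) (Fin.cons m (Fin.cons m' t : Fin (L+1) → ℕ) : Fin (L+2) → ℕ)
            = (Pb x (phi b s) m' / (m' : ℝ)) / m := by
          intro m' hm'
          rw [← ih b s hs' hL' m', Finset.sum_div]
          refine Finset.sum_congr rfl fun t ht => ?_
          have := hW (b::s) 0 m' t (by rw [Qs_one _ hs', zero_add])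
          rw [this]; simp
        rw [Finset.sum_congr rfl this, ← Finset.sum_div, Pb_A x _ (by simp [phi])]
        congr 2
        funext k
        rw [phi_sum b (hs' b (by simp))]
        unfold phi
        split_ifs with hk
        · subst hk; simp [Zs]
        · simp

theorem key_total (x : ℝ) (s : List ℕ) (hd : s ≠ []) (hs : ∀ e ∈ s, 1 ≤ e) (N : ℕ) :
    ∑ t ∈ antiT s.sum N, Wx x s t = Pb x (Zs s) N := by
  cases s with
  | nil => exact absurd rfl hd
  | cons a s =>
    have ha := hs a (by simp)
    obtain ⟨L, hL⟩ : ∃ L, (a :: s).sum = L + 1 := ⟨(a::s).sum - 1, by simp; omega⟩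
    rw [hL, sum_antiT_succ, Finset.sum_congr rfl fun m _ => key x L a s hs hL m,
      Pb_A x _ (by simp [phi])]
    congr 1
    funext k
    exact phi_sum a ha s k

theorem beta_nat (M : ℕ) : ∀ j : ℕ, ∫ x in (0:ℝ)..1, (1-x)^M * x^j =
    (M.factorial * j.factorial : ℝ) / ((M+j+1).factorial : ℝ) := by
  induction M with
  | zero =>
    intro j
    have : (j.factorial : ℝ) ≠ 0 := by positivity
    simp [integral_pow, Nat.factorial_succ]
    field_simp
  | succ M ih =>
    intro j
    have : ∀ x : ℝ, (1-x)^(M+1) * x^j = (1-x)^M * x^j - (1-x)^M * x^(j+1) := by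
      intro x; ring
    simp only [this]
    rw [intervalIntegral.integral_sub, ih, ih]
    · rw [show M + 1 + j + 1 = (M+j+1)+1 by omega, show M + (j+1) + 1 = (M+j+1)+1 by omega,
        Nat.factorial_succ (M+j+1), Nat.factorial_succ M, Nat.factorial_succ j]
      have : ((M+j+1).factorial : ℝ) ≠ 0 := by positivity
      push_cast
      field_simp
      ring
    · exact Continuous.intervalIntegrable (by fun_prop) _ _
    · exact Continuous.intervalIntegrable (by fun_prop) _ _

theorem integral_Pb (φ : ℕ → ℝ) (N : ℕ) :
    ∫ x in (0:ℝ)..1, Pb x φ N = (∑ k ∈ Finset.range (N+1), φ k) / ((N:ℝ)+1) := by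
  unfold Pb
  rw [intervalIntegral.integral_finsetSum, Finset.sum_div]
  · refine Finset.sum_congr rfl fun k hk => ?_
    have hk' : k ≤ N := by simp at hk; omega
    have : ∀ x : ℝ, (N.choose k : ℝ) * (1-x)^k * x^(N-k) * φ k
       = ((N.choose k : ℝ) * φ k) * ((1-x)^k * x^(N-k)) := by intro x; ring
    simp only [this]
    rw [intervalIntegral.integral_const_mul, beta_nat, show k + (N-k) + 1 = N+1 by omega,
      Nat.factorial_succ, Nat.cast_choose ℝ hk']
    have h1 : (k.factorial : ℝ) ≠ 0 := by positivity
    have h2 : ((N-k).factorial : ℝ) ≠ 0 := by positivity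
    have h3 : (N.factorial : ℝ) ≠ 0 := by positivity
    push_cast
    field_simp
  · intro k _
    exact Continuous.intervalIntegrable (by fun_prop) _ _

/-- The right-hand summand. -/
noncomputable def rhsT (s : List ℕ) (t : Fin s.sum → ℕ) : ℝ :=
  1 / (((Qs s t : ℝ) + 1) * ((Qs s t : ℝ) + (ent t (s.sum - 1) : ℝ) + 1) *
          ∏ i ∈ Finset.range (s.sum - 1), (ent t i : ℝ))

theorem integral_Wx (s : List ℕ) (hL : 1 ≤ s.sum) (N : ℕ) (t : Fin s.sum → ℕ)
    (ht : t ∈ antiT s.sum N) : ∫ x in (0:ℝ)..1, Wx x s t = rhsT s t := by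
  unfold Wx rhsT
  have hn : 1 ≤ ent t (s.sum - 1) := by
    rw [ent, dif_pos (by omega)]
    exact ((mem_antiT.1 ht).1 _).1
  have hn' : (ent t (s.sum - 1) : ℝ) ≠ 0 := by
    have : ent t (s.sum - 1) ≠ 0 := by omega
    exact_mod_cast this
  have hp : ∏ i ∈ Finset.range s.sum, (ent t i : ℝ)
      = (∏ i ∈ Finset.range (s.sum - 1), (ent t i : ℝ)) * ent t (s.sum - 1) := by
    rw [← Finset.prod_range_succ, Nat.sub_add_cancel hL]
  rw [hp]
  generalize (∏ i ∈ Finset.range (s.sum - 1), (ent t i : ℝ)) = p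
  generalize ent t (s.sum - 1) = n at *
  generalize Qs s t = q
  have : ∀ x : ℝ, x^q * (1 - x^n) / (p * n) = (p * n)⁻¹ * (x^q - x^(q+n)) := by
    intro x; rw [pow_add, div_eq_inv_mul]; ring
  simp only [this]
  rw [intervalIntegral.integral_const_mul, intervalIntegral.integral_sub, integral_pow, integral_pow]
  · have h1 : (q:ℝ) + 1 ≠ 0 := by positivity
    have h2 : (q:ℝ) + n + 1 ≠ 0 := by positivity
    rw [one_div, mul_inv, mul_inv, mul_inv, mul_comm p⁻¹, mul_comm _ p⁻¹, mul_comm _ p⁻¹, mul_assoc]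
    congr 1
    push_cast
    simp
    field_simp
    ring
  · exact Continuous.intervalIntegrable (by fun_prop) _ _
  · exact Continuous.intervalIntegrable (by fun_prop) _ _

theorem cesaro_id (s : List ℕ) (hd : s ≠ []) (hs : ∀ e ∈ s, 1 ≤ e) (N : ℕ) :
    ∑ t ∈ antiT s.sum N, rhsT s t = (∑ k ∈ Finset.range (N+1), Zs s k) / ((N:ℝ)+1) := by
  have hL : 1 ≤ s.sum := by
    cases s with
    | nil => exact absurd rfl hd
    | cons a s => have := hs a (by simp); simp; omega
  rw [← integral_Pb, ← Finset.sum_congr rfl fun t ht => integral_Wx s hL N t ht,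
    ← intervalIntegral.integral_finsetSum]
  · simp only [key_total _ s hd hs N]
  · intro t _
    unfold Wx
    exact Continuous.intervalIntegrable (by fun_prop) _ _

/-- The index type. -/
abbrev Idx (L : ℕ) := {t : Fin L → ℕ // (∀ i j : Fin L, i ≤ j → t j ≤ t i) ∧ ∀ i, 1 ≤ t i}

theorem tendsto_partial (L : ℕ) (f : (Fin L → ℕ) → ℝ) (hf : ∀ t, 0 ≤ f t) :
    Filter.Tendsto (fun N => ENNReal.ofReal (∑ t ∈ antiT L N, f t)) Filter.atTop
      (nhds (∑' t : Idx L, ENNReal.ofReal (f t.1))) := by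
  have h := (ENNReal.summable (f := fun t : Idx L => ENNReal.ofReal (f t.1))).hasSum
  have hB : Filter.Tendsto (fun N => (antiT L N).subtype
      (fun t : Fin L → ℕ => (∀ i j : Fin L, i ≤ j → t j ≤ t i) ∧ ∀ i, 1 ≤ t i))
      Filter.atTop Filter.atTop := by
    apply Filter.tendsto_atTop_finset_of_monotone
    · intro M N hMN t ht
      simp only [Finset.mem_subtype, mem_antiT] at ht ⊢
      exact ⟨fun i => ⟨(ht.1 i).1, (ht.1 i).2.trans hMN⟩, ht.2⟩
    · intro t
      refine ⟨∑ i, t.1 i, ?_⟩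
      simp only [Finset.mem_subtype, mem_antiT]
      exact ⟨fun i => ⟨t.2.2 i, Finset.single_le_sum (fun _ _ => Nat.zero_le _) (Finset.mem_univ i)⟩, t.2.1⟩
  have h2 := Filter.Tendsto.comp h hB
  refine h2.congr fun N => ?_
  rw [ENNReal.ofReal_sum_of_nonneg fun t _ => hf t]
  simp only [Function.comp]
  rw [Finset.sum_subtype_of_mem (f := fun t => ENNReal.ofReal (f t))]
  intro t ht
  exact ⟨(mem_antiT.1 ht).2, fun i => ((mem_antiT.1 ht).1 i).1⟩

theorem tsum_toReal (L : ℕ) (f : (Fin L → ℕ) → ℝ) (hf : ∀ t, 0 ≤ f t) :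
    ∑' t : Idx L, f t.1 = (∑' t : Idx L, ENNReal.ofReal (f t.1)).toReal := by
  rw [ENNReal.tsum_toReal_eq fun _ => ENNReal.ofReal_ne_top]
  exact tsum_congr fun t => (ENNReal.toReal_ofReal (hf _)).symm

theorem cesaro_eq (Z : ℕ → ℝ) (hm : Monotone Z) (h0 : ∀ n, 0 ≤ Z n) (A B : ENNReal)
    (hA : Filter.Tendsto (fun N => ENNReal.ofReal (Z N)) Filter.atTop (nhds A))
    (hB : Filter.Tendsto (fun N : ℕ => ENNReal.ofReal
      ((∑ k ∈ Finset.range (N+1), Z k) / ((N:ℝ)+1))) Filter.atTop (nhds B)) : A = B := by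
  apply le_antisymm
  · refine le_of_tendsto' hA fun K => ?_
    have h1 : Filter.Tendsto (fun N : ℕ => ENNReal.ofReal ((1 - (K:ℝ) * (1 / ((N:ℝ)+1))) * Z K))
        Filter.atTop (nhds (ENNReal.ofReal ((1 - (K:ℝ) * 0) * Z K))) := by
      apply ENNReal.tendsto_ofReal
      exact ((tendsto_one_div_add_atTop_nhds_zero_nat.const_mul _).const_sub _).mul_const _
    rw [mul_zero, sub_zero, one_mul] at h1
    refine le_of_tendsto_of_tendsto h1 hB ?_
    filter_upwards [Filter.eventually_ge_atTop K] with N hN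
    apply ENNReal.ofReal_le_ofReal
    have hp : (0:ℝ) < (N:ℝ)+1 := by positivity
    rw [le_div_iff₀ hp]
    have h2 : ∑ k ∈ Finset.Ico K (N+1), Z K ≤ ∑ k ∈ Finset.range (N+1), Z k := by
      calc _ ≤ ∑ k ∈ Finset.Ico K (N+1), Z k :=
            Finset.sum_le_sum fun k hk => hm (Finset.mem_Ico.1 hk).1
        _ ≤ _ := by
          apply Finset.sum_le_sum_of_subset_of_nonneg
          · intro k hk; simp at hk ⊢; omega
          · intro k _ _; exact h0 k
    rw [Finset.sum_const, Nat.card_Ico, nsmul_eq_mul, Nat.cast_sub (by omega)] at h2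
    refine le_trans (le_of_eq ?_) h2
    push_cast
    field_simp
  · refine le_of_tendsto_of_tendsto' hB hA fun N => ?_
    apply ENNReal.ofReal_le_ofReal
    rw [div_le_iff₀ (by positivity)]
    calc _ ≤ ∑ k ∈ Finset.range (N+1), Z N :=
          Finset.sum_le_sum fun k hk => hm (by simp at hk; omega)
      _ = _ := by simp; ring

/-- New series representation of an arbitrary multiple zeta-star value. -/
theorem stmt_19 (s : List ℕ) (hd : s ≠ []) (hpos : ∀ e ∈ s, 1 ≤ e)
    (h1 : 1 < s.head hd) :
    LiStar s (List.replicate s.length (1 : ℝ)) =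
      ∑' t : {t : Fin s.sum → ℕ // (∀ i j : Fin s.sum, i ≤ j → t j ≤ t i) ∧ ∀ i, 1 ≤ t i},
        1 / (((Qs s t.1 : ℝ) + 1) * ((Qs s t.1 : ℝ) + (ent t.1 (s.sum - 1) : ℝ) + 1) *
          ∏ i ∈ Finset.range (s.sum - 1), (ent t.1 i : ℝ)) := by
  have hL : LiStar s (List.replicate s.length (1 : ℝ)) =
      ∑' m : Idx s.length, ∏ i : Fin s.length, 1 / (m.1 i : ℝ) ^ s.get i := by
    unfold LiStar
    refine tsum_congr fun m => Finset.prod_congr rfl fun i _ => ?_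
    simp
  have hf : ∀ t : Fin s.length → ℕ, 0 ≤ ∏ i : Fin s.length, 1 / (t i : ℝ) ^ s.get i :=
    fun t => Finset.prod_nonneg fun i _ => by positivity
  have hg : ∀ t, 0 ≤ rhsT s t := fun t => by unfold rhsT; positivity
  have hA := tendsto_partial _ _ hf
  have hB := tendsto_partial _ _ hg
  simp only [Zs_eq] at hA
  simp only [cesaro_id s hd hpos] at hB
  have hAB := cesaro_eq (Zs s) (Zs_mono s) (Zs_nonneg s) _ _ hA hB
  rw [hL, tsum_toReal _ _ hf, hAB, ← tsum_toReal _ _ hg]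
  rfl
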